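/- arXiv:1208.5298 — 3 statements merged into one kernel-verified Lean document; each statement's English description precedes it below -/
import Mathlib

section
/- Every commutative ring R is either submaximal or a Hilbert ring (i.e., every G-ideal of R is maximal; equivalently, every prime ideal of R is an intersection of maximal ideals). -/
/-- A ring is submaximal if it has a maximal subring. -/
def Submaximal (R : Type*) [CommRing R] : Prop :=
  ∃ S : Subring R, S ≠ ⊤ ∧ ∀ T : Subring R, S < T → T = ⊤

/-!
If some prime of `R` is not an intersection of maximal ideals, a quotient of `R` is a domain `D`
with nonzero Jacobson radical `J`, and maximal subrings lift along quotients. Let `k` be `ℤ` or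
`ZMod p` according to the characteristic of `D`. If `D` is not algebraic over `k`, some `x ∈ J` is
transcendental over `k`; the unit `x + 1` is then part of a transcendence basis, hence a prime
element of a polynomial ring `B ⊆ D` over which `D` is algebraic. If `D` is algebraic over `k`, then
`J` meets `k` nontrivially, and since `k` has zero Jacobson radical some prime of `B = k` becomes a
unit in `D`. In both cases a prime `u` of the factorial ring `B` is a unit of `D`. The elements of
`D` integral over the localization of `B` at `(u)` form a subring which by lying over omits `u⁻¹`,
but which generates `D` together with `u⁻¹`; by Zorn's lemma it lies in a maximal subring.
-/

section MaximalSubrings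

variable {R S : Type*} [CommRing R] [CommRing S]

theorem Submaximal.of_closure_union_eq_top {A : Subring R} {s : Set R} (hA : A ≠ ⊤)
    (hs : s.Finite) (h : Subring.closure (A ∪ s) = ⊤) : Submaximal R := by
  have eq_top {T : Subring R} (hAT : A ≤ T) (hsT : s ⊆ T) : T = ⊤ :=
    top_le_iff.1 (h ▸ Subring.closure_le.2 (Set.union_subset hAT hsT))
  let F := {T : Subring R | A ≤ T ∧ ¬s ⊆ T}
  have sSup_mem {c : Set (Subring R)} (hcF : c ⊆ F) (hc : IsChain (· ≤ ·) c)
      (hne : c.Nonempty) : sSup c ∈ F := by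
    obtain ⟨T₀, hT₀⟩ := hne
    refine ⟨(hcF hT₀).1.trans (le_sSup hT₀), fun hsc ↦ ?_⟩
    rw [Subring.coe_sSup_of_directedOn ⟨T₀, hT₀⟩ hc.directedOn, ← hs.coe_toFinset] at hsc
    obtain ⟨T, hT, hsT⟩ := DirectedOn.exists_mem_subset_of_finset_subset_biUnion
      ⟨T₀, hT₀⟩ hc.directedOn hsc
    exact (hcF hT).2 (hs.coe_toFinset ▸ hsT)
  obtain ⟨M, hAM, hM⟩ := zorn_le_nonempty₀ F
    (fun c hcF hc T hT ↦ ⟨sSup c, sSup_mem hcF hc ⟨T, hT⟩, fun _ ↦ le_sSup⟩)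
    A ⟨le_rfl, fun hsA ↦ hA (eq_top le_rfl hsA)⟩
  refine ⟨M, fun hM_top ↦ hM.prop.2 (hM_top ▸ Set.subset_univ s), fun T hMT ↦ ?_⟩
  by_contra hT
  exact hM.not_prop_of_gt hMT
    ⟨hAM.trans hMT.le, fun hsT ↦ hT (eq_top (hAM.trans hMT.le) hsT)⟩

theorem Submaximal.of_surjective {f : R →+* S} (hf : Function.Surjective f)
    (h : Submaximal S) : Submaximal R := by
  obtain ⟨A, hA, hmax⟩ := h
  have map_comap : (A.comap f).map f = A := Subring.map_comap_eq_self_of_surjective hf A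
  refine ⟨A.comap f, fun h ↦ hA ?_, fun T hT ↦ ?_⟩
  · rw [← map_comap, h, ← RingHom.range_eq_map, RingHom.range_eq_top.2 hf]
  · have comap_map : (T.map f).comap f = T :=
      Subring.comap_map_eq_self fun x hx ↦ hT.le (show f x ∈ A from hx ▸ A.zero_mem)
    have hlt : A < T.map f := by
      refine lt_of_le_of_ne (map_comap ▸ (Subring.gc_map_comap f).monotone_l hT.le) fun h ↦ hT.ne ?_
      rw [h, comap_map]
    rw [← comap_map, hmax _ hlt, Subring.comap_top]

end MaximalSubrings

section IntegralClosureAway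

variable {R : Type*} [CommRing R]

/-- The elements of `S` that become integral after inverting the submonoid `M` of `R`, i.e. the
preimage in `S` of the integral closure of `M⁻¹R` in `M⁻¹S`. The condition is stated with
denominators cleared, so that no localization has to be formed. -/
def integralClosureAway (M : Submonoid R) (S : Type*) [CommRing S] [Algebra R S] :
    Subalgebra R S where
  carrier := {x | ∃ r ∈ M, IsIntegral R (r • x)}
  mul_mem' := by
    rintro x y ⟨a, ha, hx⟩ ⟨b, hb, hy⟩
    exact ⟨a * b, M.mul_mem ha hb, smul_mul_smul_comm a x b y ▸ hx.mul hy⟩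
  add_mem' := by
    rintro x y ⟨a, ha, hx⟩ ⟨b, hb, hy⟩
    refine ⟨a * b, M.mul_mem ha hb, ?_⟩
    have h : (a * b) • (x + y) = b • a • x + a • b • y := by
      rw [smul_add, mul_smul a b y, mul_comm a b, mul_smul b a x]
    exact h ▸ (hx.smul b).add (hy.smul a)
  algebraMap_mem' r := ⟨1, M.one_mem, (one_smul R (algebraMap R S r)).symm ▸ isIntegral_algebraMap⟩

variable {S : Type*} [CommRing S] [Algebra R S]

theorem mem_of_algebraMap_eq_mul_of_isIntegral [FaithfulSMul R S] {P : Ideal R} [P.IsPrime]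
    {r u : R} {x : S} (hu : u ∈ P) (hx : IsIntegral R x)
    (h : algebraMap R S r = algebraMap R S u * x) : r ∈ P := by
  have := FaithfulSMul.tower_bot R (integralClosure R S) S
  obtain ⟨Q, _, _⟩ := Ideal.nonempty_primesOver (S := integralClosure R S) P
  have hr : algebraMap R (integralClosure R S) r = algebraMap R _ u * ⟨x, hx⟩ := Subtype.ext h
  rw [Q.mem_of_liesOver P] at hu ⊢
  exact hr ▸ Q.mul_mem_right _ hu

theorem inv_notMem_integralClosureAway_primeCompl [FaithfulSMul R S] {P : Ideal R} [P.IsPrime]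
    {u : R} {v : S} (hu : u ∈ P) (huv : algebraMap R S u * v = 1) :
    v ∉ integralClosureAway P.primeCompl S := by
  rintro ⟨r, hr, hrv⟩
  refine hr (mem_of_algebraMap_eq_mul_of_isIntegral hu hrv ?_)
  rw [Algebra.smul_def, mul_left_comm, huv, mul_one]

theorem exists_pow_smul_mem_integralClosureAway [IsDomain R] [WfDvdMonoid R]
    {M : Submonoid R} {u : R} {x : S} (hu : ¬IsUnit u) (hM : ∀ r, ¬u ∣ r → r ∈ M)
    (hx : IsAlgebraic R x) : ∃ n : ℕ, u ^ n • x ∈ integralClosureAway M S := by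
  obtain ⟨r, hr, hrx⟩ := hx.exists_integral_multiple
  obtain ⟨c, hc, hcu⟩ := (FiniteMultiplicity.of_not_isUnit hu hr).exists_eq_pow_mul_and_not_dvd
  refine ⟨multiplicity u r, c, hM c hcu, ?_⟩
  rwa [smul_smul, mul_comm c, ← hc]

end IntegralClosureAway

section UnitInAlgebraicExtension

variable {B D : Type*} [CommRing B] [IsDomain B] [CommRing D] [Algebra B D]

theorem Submaximal.of_prime_of_isUnit_algebraMap [WfDvdMonoid B] [FaithfulSMul B D]
    [Algebra.IsAlgebraic B D] {u : B} (hu : Prime u) (hunit : IsUnit (algebraMap B D u)) :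
    Submaximal D := by
  have : (Ideal.span {u}).IsPrime := (Ideal.span_singleton_prime hu.ne_zero).2 hu
  obtain ⟨v, huv⟩ := hunit.exists_right_inv
  let A := integralClosureAway (Ideal.span {u}).primeCompl D
  have hvA : v ∉ A :=
    inv_notMem_integralClosureAway_primeCompl (Ideal.mem_span_singleton_self u) huv
  refine .of_closure_union_eq_top (A := A.toSubring)
    (fun h ↦ hvA (Subalgebra.mem_toSubring.1 (h ▸ Subring.mem_top v))) (Set.finite_singleton v)
    (eq_top_iff.2 fun d _ ↦ ?_)
  obtain ⟨n, hn⟩ : ∃ n : ℕ, u ^ n • d ∈ A :=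
    exists_pow_smul_mem_integralClosureAway hu.not_isUnit
      (fun _ ↦ mt Ideal.mem_span_singleton.1) (Algebra.IsAlgebraic.isAlgebraic d)
  have hd : d = v ^ n * (u ^ n • d) := by
    rw [Algebra.smul_def, map_pow, ← mul_assoc, ← mul_pow, mul_comm v, huv, one_pow, one_mul]
  rw [hd]
  exact mul_mem (pow_mem (Subring.subset_closure (.inr rfl)) n)
    (Subring.subset_closure (.inl hn))

variable [UniqueFactorizationMonoid B]

theorem Submaximal.of_transcendental_of_isUnit {u : D} (hu : Transcendental B u)
    (hunit : IsUnit u) : Submaximal D := by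
  obtain ⟨t, hut, ht⟩ := exists_isTranscendenceBasis_superset (s := {u})
    ((algebraicIndependent_singleton_iff (⟨u, rfl⟩ : ({u} : Set D))).2 hu)
  have := ht.isAlgebraic
  let e := ht.1.aevalEquiv
  have := e.symm.toMulEquiv.isDomain
  have : UniqueFactorizationMonoid (Algebra.adjoin B (Set.range ((↑) : t → D))) :=
    e.toMulEquiv.uniqueFactorizationMonoid inferInstance
  let i : t := ⟨u, hut rfl⟩
  have hX : Prime (e (MvPolynomial.X i)) := (MulEquiv.prime_iff e).2 (MvPolynomial.X_prime)
  have he : algebraMap _ D (e (MvPolynomial.X i)) = u := by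
    rw [ht.1.algebraMap_aevalEquiv, MvPolynomial.aeval_X]
  exact .of_prime_of_isUnit_algebraMap hX (he ▸ hunit)

end UnitInAlgebraicExtension

section JacobsonRadical

variable {k D : Type*} [CommRing k] [CommRing D] [Algebra k D]

theorem isAlgebraic_of_forall_mem_ideal [NoZeroDivisors k] [NoZeroDivisors D]
    {I : Ideal D} (hI : I ≠ ⊥) (h : ∀ x ∈ I, IsAlgebraic k x) : Algebra.IsAlgebraic k D := by
  obtain ⟨x, hxI, hx⟩ := (Submodule.ne_bot_iff I).1 hI
  exact ⟨fun y ↦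
    .of_mul (mem_nonZeroDivisors_of_ne_zero hx) (h x hxI) (h _ (I.mul_mem_right y hxI))⟩

variable [IsDomain D]

theorem exists_not_isUnit_isUnit_algebraMap [Algebra.IsAlgebraic k D]
    (hk : (⊥ : Ideal k).jacobson = ⊥) (hD : (⊥ : Ideal D).jacobson ≠ ⊥) :
    ∃ b : k, ¬IsUnit b ∧ IsUnit (algebraMap k D b) := by
  obtain ⟨x, hxJ, hx⟩ := (Submodule.ne_bot_iff _).1 hD
  have hcomap := Ideal.comap_ne_bot_of_algebraic_mem hx hxJ
    (Algebra.IsAlgebraic.isAlgebraic (R := k) x)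
  obtain ⟨r, hrJ, hr⟩ := (Submodule.ne_bot_iff _).1 hcomap
  have hr' : r ∉ (⊥ : Ideal k).jacobson := by rwa [hk, Ideal.mem_bot]
  obtain ⟨y, hy⟩ := not_forall.1 (mt Ideal.mem_jacobson_bot.2 hr')
  refine ⟨r * y + 1, hy, ?_⟩
  rw [map_add, map_mul, map_one]
  exact Ideal.mem_jacobson_bot.1 hrJ _

variable [IsDomain k] [UniqueFactorizationMonoid k]

theorem Submaximal.of_isAlgebraic_of_jacobson_bot_ne_bot [FaithfulSMul k D]
    [Algebra.IsAlgebraic k D] (hk : (⊥ : Ideal k).jacobson = ⊥)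
    (hD : (⊥ : Ideal D).jacobson ≠ ⊥) : Submaximal D := by
  obtain ⟨b, hb, hbD⟩ := exists_not_isUnit_isUnit_algebraMap hk hD
  have hb₀ : b ≠ 0 := by
    rintro rfl
    exact hbD.ne_zero (map_zero _)
  obtain ⟨u, hu, hub⟩ := WfDvdMonoid.exists_irreducible_factor hb hb₀
  exact .of_prime_of_isUnit_algebraMap hu.prime
    (isUnit_of_dvd_unit (map_dvd (algebraMap k D) hub) hbD)

theorem Submaximal.of_not_isAlgebraic_of_jacobson_bot_ne_bot (h : ¬Algebra.IsAlgebraic k D)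
    (hD : (⊥ : Ideal D).jacobson ≠ ⊥) : Submaximal D := by
  obtain ⟨x, hxJ, hx⟩ : ∃ x ∈ (⊥ : Ideal D).jacobson, Transcendental k x := by
    by_contra! hJ
    exact h (isAlgebraic_of_forall_mem_ideal hD fun x hx ↦ not_not.1 (hJ x hx))
  have hx1 : Transcendental k (x + 1) := fun hx1 ↦
    hx (add_sub_cancel_right x 1 ▸ hx1.sub isAlgebraic_one)
  exact .of_transcendental_of_isUnit hx1 (mul_one x ▸ Ideal.mem_jacobson_bot.1 hxJ 1)

theorem Submaximal.of_algebra_of_jacobson_bot_ne_bot [FaithfulSMul k D]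
    (hk : (⊥ : Ideal k).jacobson = ⊥) (hD : (⊥ : Ideal D).jacobson ≠ ⊥) : Submaximal D := by
  by_cases h : Algebra.IsAlgebraic k D
  · exact .of_isAlgebraic_of_jacobson_bot_ne_bot hk hD
  · exact .of_not_isAlgebraic_of_jacobson_bot_ne_bot h hD

theorem jacobson_bot_int : (⊥ : Ideal ℤ).jacobson = ⊥ := by
  refine (Submodule.eq_bot_iff _).2 fun n hn ↦ ?_
  obtain h | h := Int.isUnit_iff.1 (Ideal.mem_jacobson_bot.1 hn n)
  · exact mul_self_eq_zero.1 (add_eq_right.1 h)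
  · linarith [mul_self_nonneg n]

theorem Submaximal.of_jacobson_bot_ne_bot (hD : (⊥ : Ideal D).jacobson ≠ ⊥) : Submaximal D := by
  obtain _ | ⟨p, _, _⟩ := CharP.exists' D
  · exact .of_algebra_of_jacobson_bot_ne_bot jacobson_bot_int hD
  · let _ : Algebra (ZMod p) D := ZMod.algebra D p
    exact .of_algebra_of_jacobson_bot_ne_bot (k := ZMod p) Ideal.jacobson_eq_self_of_isMaximal hD

end JacobsonRadical

theorem submaximal_or_isJacobsonRing (R : Type*) [CommRing R] :
    Submaximal R ∨ IsJacobsonRing R := by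
  refine or_iff_not_imp_left.2 fun hR ↦ isJacobsonRing_iff_prime_eq.2 fun P hP ↦ ?_
  rw [Ideal.jacobson_eq_iff_jacobson_quotient_eq_bot]
  by_contra hJ
  exact hR (.of_surjective Ideal.Quotient.mk_surjective (.of_jacobson_bot_ne_bot hJ))

theorem stmt13 {R : Type*} [CommRing R] [Nontrivial R] :
    Submaximal R ∨
      ∀ P : Ideal R, P.IsPrime → P = sInf {M : Ideal R | M.IsMaximal ∧ P ≤ M} := by
  refine (submaximal_or_isJacobsonRing R).imp_right fun hR P hP ↦ ?_
  have hJ : P.jacobson = P := isJacobsonRing_iff_prime_eq.1 hR P hP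
  simpa only [Ideal.jacobson, and_comm] using hJ.symm
end

section
/- Let R₁ ⊆ R₂ be an extension of commutative rings with R₁ semi-local. Then either R₂ has a maximal subring or R₁ is zero-dimensional (every prime ideal of R₁ is maximal). -/
/-!
A unit `v` of a domain `T` which is a prime element of some unique factorization subring `A` of
`K = Frac T`, with `K` algebraic over `A`, produces a maximal subring: a valuation ring `V` of `K`
dominating the discrete valuation ring `A_(v)` satisfies `K = V[v⁻¹]`, so `T` is generated by `v⁻¹`
over its proper subring `V ∩ T`, and Zorn's lemma applies. Given a transcendence basis of `K` over
the prime ring `k`, the polynomial ring in that basis can serve as `A`.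

Suppose that `T` contains a ring `D` with an element `x ≠ 0` in its Jacobson radical. If `x` is
transcendental over `k`, take `v = 1 + x` and a basis containing `v`. If `x` is algebraic, then the
Jacobson radical of `D` meets `k` nontrivially; as that of `k` is zero, some nonunit of `k` becomes
a unit of `D`, and `v` can be any of its prime factors.

A minimal prime `Q` of `R₁` is the contraction of a prime `Q'` of `R₂`. If `Q` does not contain the
Jacobson radical, then `D = R₁ ⧸ Q` and `T = R₂ ⧸ Q'` are as above. Otherwise every prime over `Q`
contains the Jacobson radical, which in a semi-local ring is a finite intersection of maximal
ideals, and so is maximal.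
-/

namespace Submaximal

theorem of_sup_closure_eq_top {T : Type*} [CommRing T] {S : Subring T} (hS : S ≠ ⊤) {s : Set T}
    (hs : s.Finite) (h : S ⊔ Subring.closure s = ⊤) : Submaximal T := by
  have eq_top {S' : Subring T} (hSS' : S ≤ S') (hsS' : s ⊆ S') : S' = ⊤ :=
    top_le_iff.1 (h ▸ sup_le hSS' (Subring.closure_le.2 hsS'))
  have sSup_ne_top {c : Set (Subring T)} (hc : c ⊆ {S' | S ≤ S' ∧ S' ≠ ⊤})
      (hchain : IsChain (· ≤ ·) c) (hne : c.Nonempty) : sSup c ≠ ⊤ := by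
    intro htop
    have hsc : (hs.toFinset : Set T) ⊆ ⋃ S' ∈ c, (S' : Set T) := by
      rw [← Subring.coe_sSup_of_directedOn hne hchain.directedOn, htop]
      exact Set.subset_univ _
    obtain ⟨S', hS', hsS'⟩ :=
      hchain.directedOn.exists_mem_subset_of_finset_subset_biUnion hne hsc
    exact (hc hS').2 (eq_top (hc hS').1 (by simpa using hsS'))
  obtain ⟨M, hSM, hM⟩ := zorn_le_nonempty₀ {S' : Subring T | S ≤ S' ∧ S' ≠ ⊤}
    (fun c hc hchain S' hS' => ⟨sSup c, ⟨(hc hS').1.trans (le_sSup hS'),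
      sSup_ne_top hc hchain ⟨S', hS'⟩⟩, fun _ => le_sSup⟩) S ⟨le_rfl, hS⟩
  refine ⟨M, hM.prop.2, fun T' hT' => ?_⟩
  by_contra hne
  exact hT'.not_ge (hM.2 ⟨hSM.trans hT'.le, hne⟩ hT'.le)

theorem of_surjective_s17 {R T : Type*} [CommRing R] [CommRing T] {f : R →+* T}
    (hf : Function.Surjective f) (h : Submaximal T) : Submaximal R := by
  obtain ⟨S, hS, hmax⟩ := h
  refine ⟨S.comap f, fun htop => hS ?_, fun T' hT' => ?_⟩
  · rw [← Subring.map_comap_eq_self_of_surjective hf S, htop, ← RingHom.range_eq_map,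
      RingHom.range_eq_top_of_surjective f hf]
  · have hcomap : (T'.map f).comap f = T' := by
      refine Subring.comap_map_eq_self fun x hx => hT'.le ?_
      rw [Subring.mem_comap, Set.mem_singleton_iff.1 hx]
      exact S.zero_mem
    have hlt : S < T'.map f := by
      refine lt_of_le_of_ne ?_ fun heq => hT'.ne (heq ▸ hcomap)
      rw [← Subring.map_comap_eq_self_of_surjective hf S]
      exact (Subring.gc_map_comap f).monotone_l hT'.le
    rw [← hcomap, hmax _ hlt, Subring.comap_top]

end Submaximal

section Valuation

variable {A K : Type*} [CommRing A] [Field K]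

theorem exists_valuationSubring_valuation_lt_one_iff {f : A →+* K} {p : Ideal A} [p.IsPrime]
    (hp : RingHom.ker f ≤ p) :
    ∃ V : ValuationSubring K,
      ∀ a, V.valuation (f a) ≤ 1 ∧ (V.valuation (f a) < 1 ↔ a ∈ p) := by
  have isUnit_of_notMem (y : p.primeCompl) : IsUnit (f y) :=
    isUnit_iff_ne_zero.2 fun hy => y.2 (hp hy)
  let g : Localization.AtPrime p →+* K := IsLocalization.lift isUnit_of_notMem
  have hg (a : A) : g (algebraMap A _ a) = f a := IsLocalization.lift_eq isUnit_of_notMem a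
  obtain ⟨V, hgV, hlocal⟩ := IsLocalRing.exists_factor_valuationRing g
  let φ : Localization.AtPrime p →+* V := g.codRestrict V.toSubring hgV
  have hφ (a : A) : (φ (algebraMap A _ a) : K) = f a := hg a
  refine ⟨V, fun a => ⟨?_, ?_⟩⟩
  · rw [← hφ a]
    exact V.valuation_le_one _
  · have : IsLocalHom φ := hlocal
    rw [← hφ a, ← V.valuation_lt_one_iff, IsLocalRing.mem_maximalIdeal, mem_nonunits_iff,
      isUnit_map_iff φ, IsLocalization.AtPrime.isUnit_to_map_iff _ p, Ideal.mem_primeCompl_iff,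
      not_not]

theorem mem_valuationSubring_of_isIntegral [Algebra A K] {V : ValuationSubring K}
    (hA : ∀ a, algebraMap A K a ∈ V) {y : K} (hy : IsIntegral A y) : y ∈ V := by
  have hyV : IsIntegral V y :=
    hy.map_of_comp_eq ((algebraMap A K).codRestrict V.toSubring hA) (RingHom.id K) rfl
  obtain ⟨z, rfl⟩ := IsIntegrallyClosed.isIntegral_iff.1 hyV
  exact z.2

theorem exists_valuationSubring_forall_exists_pow_mul_mem [WfDvdMonoid A] [Algebra A K]
    [FaithfulSMul A K] [Algebra.IsAlgebraic A K] {u : A} (hu : Prime u) :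
    ∃ V : ValuationSubring K, (algebraMap A K u)⁻¹ ∉ V ∧
      ∀ y : K, ∃ n : ℕ, algebraMap A K u ^ n * y ∈ V := by
  have hinj := FaithfulSMul.algebraMap_injective A K
  have : IsDomain A := hinj.isDomain (algebraMap A K)
  have : (Ideal.span {u}).IsPrime := (Ideal.span_singleton_prime hu.ne_zero).2 hu
  obtain ⟨V, hV⟩ := exists_valuationSubring_valuation_lt_one_iff (f := algebraMap A K)
    (p := Ideal.span {u}) (by simp [(RingHom.injective_iff_ker_eq_bot _).1 hinj])
  have hAV (a : A) : algebraMap A K a ∈ V := (V.valuation_le_one_iff _).1 (hV a).1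
  have hval_u : V.valuation (algebraMap A K u) < 1 :=
    (hV u).2.2 (Ideal.mem_span_singleton_self u)
  refine ⟨V, ?_, fun y => ?_⟩
  · have hu0 : algebraMap A K u ≠ 0 := by simpa using hu.ne_zero
    exact (V.mem_nonunits_iff_or.1 (V.mem_nonunits_iff.2 hval_u)).resolve_left hu0
  · obtain ⟨a, ha, hint⟩ := (Algebra.IsAlgebraic.isAlgebraic (R := A) y).exists_integral_multiple
    obtain ⟨n, g, hug, rfl⟩ := WfDvdMonoid.max_power_factor ha hu.irreducible
    have hval_g : V.valuation (algebraMap A K g) = 1 :=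
      (hV g).1.antisymm (not_lt.1 fun hlt => hug (Ideal.mem_span_singleton.1 ((hV g).2.1 hlt)))
    refine ⟨n, (V.valuation_le_one_iff _).1 ?_⟩
    calc V.valuation (algebraMap A K u ^ n * y)
        = V.valuation ((u ^ n * g) • y) := by simp [Algebra.smul_def, hval_g]
      _ ≤ 1 := (V.valuation_le_one_iff _).2 (mem_valuationSubring_of_isIntegral hAV hint)

end Valuation

namespace Submaximal

section UniqueFactorization

variable {k T K : Type*} [CommRing T]

theorem of_algebraMap_prime_eq_unit {A : Type*} [CommRing A] [WfDvdMonoid A] [Field K]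
    [Algebra A K] [FaithfulSMul A K] [Algebra.IsAlgebraic A K] [Algebra T K] {u : A}
    (hu : Prime u) {v : Tˣ} (huv : algebraMap A K u = algebraMap T K v) : Submaximal T := by
  obtain ⟨V, hinv, hpow⟩ := exists_valuationSubring_forall_exists_pow_mul_mem (K := K) hu
  rw [huv] at hinv hpow
  let S : Subring T := V.toSubring.comap (algebraMap T K)
  have hvS : (↑v⁻¹ : T) ∉ S := fun hmem => hinv (by simpa [S] using hmem)
  refine of_sup_closure_eq_top (S := S) (fun htop => hvS (htop ▸ Subring.mem_top _))
    (Set.finite_singleton (↑v⁻¹ : T)) ((Subring.eq_top_iff' _).2 fun t => ?_)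
  obtain ⟨n, hn⟩ := hpow (algebraMap T K t)
  have hS : (v : T) ^ n * t ∈ S := by simpa [S] using hn
  have hv : (↑v⁻¹ : T) ∈ Subring.closure {(↑v⁻¹ : T)} := Subring.mem_closure_of_mem rfl
  have ht : (↑v⁻¹ : T) ^ n * ((v : T) ^ n * t) = t := by
    rw [← mul_assoc, ← mul_pow, Units.inv_mul, one_pow, one_mul]
  rw [← ht]
  exact mul_mem (pow_mem (SetLike.le_def.1 le_sup_right hv) n) (SetLike.le_def.1 le_sup_left hS)

variable [CommRing k] [IsDomain k] [UniqueFactorizationMonoid k]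

theorem of_isTranscendenceBasis [Field K] [Algebra k K] [Algebra T K] {ι : Type*} {s : ι → K}
    (hs : IsTranscendenceBasis k s) {u : MvPolynomial ι k} (hu : Prime u) {v : Tˣ}
    (huv : MvPolynomial.aeval s u = algebraMap T K v) : Submaximal T := by
  let e := hs.1.aevalEquiv
  have : UniqueFactorizationMonoid (Algebra.adjoin k (Set.range s)) :=
    e.toMulEquiv.uniqueFactorizationMonoid inferInstance
  have := hs.isAlgebraic
  exact of_algebraMap_prime_eq_unit ((MulEquiv.prime_iff e.toMulEquiv).2 hu)
    ((hs.1.algebraMap_aevalEquiv u).trans huv)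

variable [IsDomain T] [Algebra k T]

theorem of_transcendental_unit {v : Tˣ} (hv : Transcendental k (v : T)) : Submaximal T := by
  let w : FractionRing T := algebraMap T (FractionRing T) v
  have hw : Transcendental k w :=
    (transcendental_algebraMap_iff (IsFractionRing.injective T (FractionRing T))).2 hv
  obtain ⟨t, hwt, ht⟩ := exists_isTranscendenceBasis_superset (R := k) (s := {w})
    ((algebraicIndependent_singleton_iff (⟨w, rfl⟩ : ({w} : Set (FractionRing T)))).2 hw)
  exact of_isTranscendenceBasis ht (MvPolynomial.X_prime (i := ⟨w, hwt rfl⟩)) (v := v) (by simp [w])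

theorem of_prime_isUnit_algebraMap [FaithfulSMul k T] {p : k} (hp : Prime p)
    (hpT : IsUnit (algebraMap k T p)) : Submaximal T := by
  obtain ⟨v, hv⟩ := hpT
  obtain ⟨t, ht⟩ := exists_isTranscendenceBasis k (FractionRing T)
  exact of_isTranscendenceBasis ht ((MvPolynomial.prime_C_iff _).2 hp) (v := v)
    (by rw [hv, MvPolynomial.aeval_C, ← IsScalarTower.algebraMap_apply])

end UniqueFactorization

end Submaximal

theorem exists_prime_isUnit_algebraMap {k D : Type*} [CommRing k] [UniqueFactorizationMonoid k]
    [CommRing D] [Nontrivial D] [Algebra k D]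
    (hk : Ring.jacobson k = ⊥) {r : k} (hr0 : r ≠ 0) (hr : algebraMap k D r ∈ Ring.jacobson D) :
    ∃ p : k, Prime p ∧ IsUnit (algebraMap k D p) := by
  have hrk : r ∉ Ring.jacobson k := by rwa [hk, Ideal.mem_bot]
  rw [← Ideal.jacobson_bot, Ideal.mem_jacobson_bot] at hr hrk
  obtain ⟨s, hs⟩ := not_forall.1 hrk
  have hunit : IsUnit (algebraMap k D (r * s + 1)) := by simpa using hr (algebraMap k D s)
  have hne : r * s + 1 ≠ 0 := fun h0 => not_isUnit_zero (by rwa [h0, map_zero] at hunit)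
  obtain ⟨p, hp, hdvd⟩ := WfDvdMonoid.exists_irreducible_factor hs hne
  exact ⟨p, hp.prime, isUnit_of_dvd_unit (map_dvd _ hdvd) hunit⟩

theorem jacobson_int_eq_bot : Ring.jacobson ℤ = ⊥ := by
  refine (Submodule.eq_bot_iff _).2 fun r hr => ?_
  rw [← Ideal.jacobson_bot, Ideal.mem_jacobson_bot] at hr
  rcases Int.isUnit_iff.1 (hr r) with h | h
  · exact mul_self_eq_zero.1 (by linarith)
  · nlinarith

theorem Submaximal.of_jacobson_eq_bot_of_jacobson_ne_bot {k D T : Type*} [CommRing k] [IsDomain k]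
    [UniqueFactorizationMonoid k] [CommRing D] [CommRing T] [IsDomain T] [Algebra k D]
    [Algebra k T] [Algebra D T] [IsScalarTower k D T] [FaithfulSMul k T] [FaithfulSMul D T]
    (hk : Ring.jacobson k = ⊥) (hD : Ring.jacobson D ≠ ⊥) : Submaximal T := by
  have hinj := FaithfulSMul.algebraMap_injective D T
  have : IsDomain D := hinj.isDomain (algebraMap D T)
  obtain ⟨x, hx, hx0⟩ := Submodule.exists_mem_ne_zero_of_ne_bot hD
  by_cases halg : IsAlgebraic k x
  · obtain ⟨r, hr0, hxr⟩ := halg.exists_nonzero_dvd (mem_nonZeroDivisors_of_ne_zero hx0)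
    obtain ⟨p, hp, hpD⟩ := exists_prime_isUnit_algebraMap hk hr0 (Ideal.mem_of_dvd _ hxr hx)
    refine of_prime_isUnit_algebraMap hp ?_
    rw [IsScalarTower.algebraMap_apply k D T]
    exact hpD.map (algebraMap D T)
  · rw [← Ideal.jacobson_bot, Ideal.mem_jacobson_bot] at hx
    obtain ⟨v, hv⟩ : IsUnit (x + 1) := by simpa using hx 1
    have hvD : Transcendental k (v : D) := fun h =>
      halg (by simpa [hv] using h.sub isAlgebraic_one)
    exact of_transcendental_unit (k := k) (v := v.map (algebraMap D T).toMonoidHom)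
      ((transcendental_algebraMap_iff hinj).2 hvD)

theorem Submaximal.of_jacobson_ne_bot {D T : Type*} [CommRing D] [CommRing T] [IsDomain T]
    [Algebra D T] [FaithfulSMul D T] (hD : Ring.jacobson D ≠ ⊥) : Submaximal T := by
  obtain ⟨p, hpT⟩ := CharP.exists T
  rcases CharP.char_is_prime_or_zero T p with hp | rfl
  · have : Fact p.Prime := ⟨hp⟩
    have : CharP D p := (RingHom.charP_iff _ (FaithfulSMul.algebraMap_injective D T) p).2 hpT
    let := ZMod.algebra D p
    let := ZMod.algebra T p
    have : IsScalarTower (ZMod p) D T := .of_algebraMap_eq' (Subsingleton.elim _ _)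
    exact of_jacobson_eq_bot_of_jacobson_ne_bot (IsSemisimpleRing.jacobson_eq_bot (ZMod p)) hD
  · have : CharZero T := CharP.charP_to_charZero T
    exact of_jacobson_eq_bot_of_jacobson_ne_bot jacobson_int_eq_bot hD

theorem Submaximal.of_mem_minimalPrimes {R S : Type*} [CommRing R] [CommRing S] [Algebra R S]
    [FaithfulSMul R S] {Q : Ideal R} (hQ : Q ∈ minimalPrimes R) (hJ : ¬ Ring.jacobson R ≤ Q) :
    Submaximal S := by
  obtain ⟨Q', _, hcomap⟩ := Ideal.exists_comap_eq_of_mem_minimalPrimes_of_injective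
    (FaithfulSMul.algebraMap_injective R S) Q hQ
  have : Q'.LiesOver Q := ⟨hcomap.symm⟩
  exact of_surjective_s17 Ideal.Quotient.mk_surjective
    (of_jacobson_ne_bot (D := R ⧸ Q) (T := S ⧸ Q') (mt Ring.jacobson_le_of_eq_bot hJ))

theorem isMaximal_of_jacobson_le_of_finite {R : Type*} [CommRing R]
    (hR : {M : Ideal R | M.IsMaximal}.Finite) {P : Ideal R} (hP : P.IsPrime)
    (hJ : Ring.jacobson R ≤ P) : P.IsMaximal := by
  have hinf : hR.toFinset.inf id ≤ P := by
    rwa [Finset.inf_id_eq_sInf, hR.coe_toFinset, ← Ring.jacobson_eq_sInf_isMaximal]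
  obtain ⟨M, hM, hMP⟩ := hP.inf_le'.1 hinf
  have hM' : M.IsMaximal := hR.mem_toFinset.1 hM
  exact hM'.eq_of_le hP.ne_top hMP ▸ hM'

theorem stmt17_general {R₁ R₂ : Type*} [CommRing R₁] [CommRing R₂] [Algebra R₁ R₂]
    [FaithfulSMul R₁ R₂]
    (h : ∀ P : Ideal R₁, P.IsPrime → Ring.jacobson R₁ ≤ P → P.IsMaximal) :
    Submaximal R₂ ∨ ∀ P : Ideal R₁, P.IsPrime → P.IsMaximal := by
  refine or_iff_not_imp_left.2 fun hR₂ P hP => ?_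
  obtain ⟨Q, hQ, hQP⟩ := Ideal.exists_minimalPrimes_le (I := ⊥) (J := P) bot_le
  have hJQ : Ring.jacobson R₁ ≤ Q := by
    by_contra hJQ
    exact hR₂ (.of_mem_minimalPrimes hQ hJQ)
  exact h P hP (hJQ.trans hQP)

theorem stmt17 {R₂ : Type*} [CommRing R₂] [Nontrivial R₂] (R₁ : Subring R₂)
    (hsl : {M : Ideal R₁ | M.IsMaximal}.Finite) :
    Submaximal R₂ ∨ ∀ P : Ideal R₁, P.IsPrime → P.IsMaximal :=
  stmt17_general fun _ hP => isMaximal_of_jacobson_le_of_finite hsl hP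
end

section
/- Every uncountable unique factorization domain has a maximal subring. -/
/-!
Suppose a unit `u` of a domain is transcendental over a subring `A`. Extend `u` to a transcendence
basis `t` of the field of fractions `K` over `A`. A valuation ring of `K` dominating the
localization of `A[t]` at the prime `(u)` does not contain `u⁻¹`. Every element of `K` is
algebraic over `A[t]`, so multiplying it by a power of `u` brings it into the valuation ring.
Intersecting with the domain gives a proper subring that generates the domain together with `u⁻¹`,
and Zorn's lemma enlarges it to a maximal subring. A general ring is handled by passing to a
quotient by a prime.

If instead every unit is algebraic over the prime subring, there are only countably many units.
Fix `x` transcendental over the prime subring. Each of the countably many nonzero elements `f(x)`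
has countably many divisors, so for some `y` the element `xy - 1` divides none of them, and `x`
becomes a transcendental unit in the quotient by `xy - 1`.
-/

open Polynomial

section Submaximal

variable {R : Type*} [CommRing R]

theorem submaximal_of_closure_insert_eq_top {S : Subring R} {a : R} (ha : a ∉ S)
    (h : Subring.closure (insert a (S : Set R)) = ⊤) : Submaximal R := by
  obtain ⟨M, hSM, hM⟩ := zorn_le_nonempty₀ {T : Subring R | a ∉ T}
    (fun c hc hchain T hT => by
      refine ⟨sSup c, fun hmem => ?_, fun _ => le_sSup⟩
      obtain ⟨T', hT', haT'⟩ := (Subring.mem_sSup_of_directedOn ⟨T, hT⟩ hchain.directedOn).1 hmem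
      exact hc hT' haT') S ha
  refine ⟨M, fun htop => hM.prop (htop ▸ Subring.mem_top a), fun T hT => ?_⟩
  have haT : a ∈ T := by
    by_contra haT
    exact hT.not_ge (hM.le_of_ge haT hT.le)
  rw [eq_top_iff, ← h, Subring.closure_le]
  exact Set.insert_subset haT (hSM.trans hT.le)

theorem Submaximal.of_surjective_s18 {S : Type*} [CommRing S] {φ : R →+* S}
    (hφ : Function.Surjective φ) (h : Submaximal S) : Submaximal R := by
  obtain ⟨M, hM, hmax⟩ := h
  have hcomap_lt {U V : Subring S} : U.comap φ < V.comap φ ↔ U < V := by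
    simp only [lt_iff_le_not_ge, ← Subring.map_le_iff_le_comap,
      Subring.map_comap_eq_self_of_surjective hφ]
  refine ⟨M.comap φ, fun htop => hM ?_, fun T hT => ?_⟩
  · rw [← Subring.map_comap_eq_self_of_surjective hφ M, htop, ← RingHom.range_eq_map,
      RingHom.range_eq_top_of_surjective φ hφ]
  · have hker : (φ ⁻¹' {0}) ⊆ (T : Set R) := fun r hr =>
      hT.le (by rw [Subring.mem_comap, hr]; exact M.zero_mem)
    have hT' : (T.map φ).comap φ = T := Subring.comap_map_eq_self hker
    rw [← hT', hmax (T.map φ) (hcomap_lt.1 (hT'.symm ▸ hT)), Subring.comap_top]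

end Submaximal

section ValuationSubring

variable {C K : Type*} [CommRing C] [Field K] [Algebra C K]

theorem exists_valuationSubring_mem_nonunits_iff [FaithfulSMul C K] (P : Ideal C) [P.IsPrime] :
    ∃ V : ValuationSubring K, ∀ c : C,
      algebraMap C K c ∈ V ∧ (algebraMap C K c ∈ V.nonunits ↔ c ∈ P) := by
  have hunit (c : P.primeCompl) : IsUnit (algebraMap C K c) := by
    refine IsUnit.mk0 _ fun hc => c.2 ?_
    rw [(FaithfulSMul.algebraMap_eq_zero_iff C K).1 hc]
    exact P.zero_mem
  let L := Localization.AtPrime P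
  obtain ⟨V, hV, hlocal⟩ := IsLocalRing.exists_factor_valuationRing
    (IsLocalization.lift hunit : L →+* K)
  refine ⟨V, fun c => ?_⟩
  rw [← IsLocalization.lift_eq (S := L) hunit c]
  refine ⟨hV _, ?_⟩
  rw [← IsLocalization.AtPrime.to_map_mem_maximal_iff L P c]
  exact (V.coe_mem_nonunits_iff (a := ⟨_, hV _⟩)).trans
    (map_mem_nonunits_iff ((IsLocalization.lift hunit).codRestrict V.toSubring hV) _)

theorem mem_valuationSubring_of_isIntegral_s18 {V : ValuationSubring K}
    (hV : ∀ c : C, algebraMap C K c ∈ V) {r : K} (hr : IsIntegral C r) : r ∈ V := by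
  have hr : IsIntegral V r :=
    hr.map_of_comp_eq ((algebraMap C K).codRestrict V.toSubring hV) (RingHom.id K) rfl
  obtain ⟨s, rfl⟩ := IsIntegrallyClosed.isIntegral_iff.1 hr
  exact s.2

theorem exists_valuationSubring_inv_notMem_of_prime [FaithfulSMul C K]
    [Algebra.IsAlgebraic C K] {p : C} (hp : Prime p)
    (hfin : ∀ c : C, c ≠ 0 → FiniteMultiplicity p c) :
    ∃ V : ValuationSubring K,
      (algebraMap C K p)⁻¹ ∉ V ∧ ∀ r : K, ∃ n : ℕ, algebraMap C K p ^ n * r ∈ V := by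
  have : (Ideal.span {p}).IsPrime := (Ideal.span_singleton_prime hp.ne_zero).2 hp
  obtain ⟨V, hV⟩ := exists_valuationSubring_mem_nonunits_iff (K := K) (Ideal.span {p})
  have hp0 : algebraMap C K p ≠ 0 := by simpa using hp.ne_zero
  refine ⟨V, ?_, fun r => ?_⟩
  · have hpV : algebraMap C K p ∈ V.nonunits := (hV p).2.2 (Ideal.mem_span_singleton_self p)
    exact (V.mem_nonunits_iff_or.1 hpV).resolve_left hp0
  obtain ⟨c, hc, hint⟩ := (Algebra.IsAlgebraic.isAlgebraic (R := C) r).exists_integral_multiple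
  obtain ⟨u, hcu, hu⟩ := (hfin c hc).exists_eq_pow_mul_and_not_dvd
  have huV : algebraMap C K u ∉ V.nonunits := by
    rwa [(hV u).2, Ideal.mem_span_singleton]
  rw [ValuationSubring.mem_nonunits_iff_or, not_or, not_not] at huV
  have hcr : c • r ∈ V := mem_valuationSubring_of_isIntegral_s18 (fun c => (hV c).1) hint
  have hpr : algebraMap C K p ^ multiplicity p c * r = (algebraMap C K u)⁻¹ * (c • r) := by
    rw [Algebra.smul_def, congrArg (algebraMap C K) hcu, map_mul, map_pow,
      eq_inv_mul_iff_mul_eq₀ huV.1, ← mul_assoc, mul_comm (algebraMap C K u)]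
  exact ⟨multiplicity p c, hpr ▸ V.mul_mem _ _ huV.2 hcr⟩

theorem finiteMultiplicity_mvPolynomial_X {σ A : Type*} [CommRing A] [IsDomain A] (i : σ)
    {f : MvPolynomial σ A} (hf : f ≠ 0) : FiniteMultiplicity (MvPolynomial.X i) f := by
  refine ⟨f.totalDegree, fun ⟨g, hg⟩ => ?_⟩
  have hg0 : g ≠ 0 := by
    rintro rfl
    exact hf (by rw [hg, mul_zero])
  have hdeg := MvPolynomial.totalDegree_mul_of_isDomain
    (pow_ne_zero (f.totalDegree + 1) (MvPolynomial.X_ne_zero (R := A) i)) hg0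
  rw [← hg, MvPolynomial.totalDegree_X_pow] at hdeg
  omega

theorem exists_valuationSubring_inv_notMem_of_transcendental {A : Type*} [CommRing A]
    [Algebra A K] {x : K} (hx : Transcendental A x) :
    ∃ V : ValuationSubring K, x⁻¹ ∉ V ∧ ∀ r : K, ∃ n : ℕ, x ^ n * r ∈ V := by
  obtain ⟨t, hxt, ht⟩ := exists_isTranscendenceBasis_superset (R := A) (s := {x})
    ((algebraicIndependent_singleton_iff (⟨x, rfl⟩ : ({x} : Set K))).2 hx)
  have : IsDomain A := ht.1.algebraMap_injective.isDomain (algebraMap A K)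
  algebraize [(MvPolynomial.aeval ((↑) : t → K) : MvPolynomial t A →ₐ[A] K).toRingHom]
  have : FaithfulSMul (MvPolynomial t A) K := (faithfulSMul_iff_algebraMap_injective _ _).2 ht.1
  have := ht.isAlgebraic
  have : Algebra.IsAlgebraic (MvPolynomial t A) K :=
    .of_ringHom_of_comp_eq ht.1.aevalEquiv.toRingHom (RingHom.id K) ht.1.aevalEquiv.surjective
      Function.injective_id rfl
  have hX : algebraMap (MvPolynomial t A) K (MvPolynomial.X ⟨x, hxt rfl⟩) = x :=
    MvPolynomial.aeval_X _ _
  simpa only [hX] using exists_valuationSubring_inv_notMem_of_prime (K := K)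
    (MvPolynomial.X_prime (R := A) (i := (⟨x, hxt rfl⟩ : t)))
    fun f hf => finiteMultiplicity_mvPolynomial_X _ hf

end ValuationSubring

section Transcendental

variable {A R : Type*} [CommRing A] [CommRing R] [Algebra A R]

theorem submaximal_of_transcendental_unit_of_isDomain [IsDomain R] (u : Rˣ)
    (hu : Transcendental A (u : R)) : Submaximal R := by
  let K := FractionRing R
  obtain ⟨V, hV, hpow⟩ := exists_valuationSubring_inv_notMem_of_transcendental
    ((transcendental_algebraMap_iff (IsFractionRing.injective R K)).2 hu)
  refine submaximal_of_closure_insert_eq_top (S := V.toSubring.comap (algebraMap R K))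
    (a := (↑u⁻¹ : R)) ?_ ?_
  · have huinv : algebraMap R K ↑u⁻¹ = (algebraMap R K u)⁻¹ := map_units_inv _ _
    rwa [Subring.mem_comap, huinv]
  · refine eq_top_iff.2 fun r _ => ?_
    obtain ⟨n, hn⟩ := hpow (algebraMap R K r)
    have hur : (u : R) ^ n * r ∈ V.toSubring.comap (algebraMap R K) := by
      rwa [Subring.mem_comap, map_mul, map_pow]
    have hr : (↑u⁻¹ : R) ^ n * ((u : R) ^ n * r) = r := by
      rw [← mul_assoc, ← mul_pow, Units.inv_mul, one_pow, one_mul]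
    rw [← hr]
    exact mul_mem (pow_mem (Subring.subset_closure (Set.mem_insert _ _)) n)
      (Subring.subset_closure (Set.mem_insert_of_mem _ hur))

theorem transcendental_quotientMk_iff {I : Ideal R} {x : R} :
    Transcendental A (Ideal.Quotient.mk I x) ↔ ∀ f : A[X], aeval x f ∈ I → f = 0 := by
  rw [transcendental_iff]
  refine forall_congr' fun f => ?_
  rw [← Ideal.Quotient.eq_zero_iff_mem, ← Ideal.Quotient.mkₐ_eq_mk A I, aeval_algHom_apply]

theorem exists_isPrime_transcendental_quotientMk [IsDomain A] {x : R} (hx : Transcendental A x) :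
    ∃ P : Ideal R, P.IsPrime ∧ Transcendental A (Ideal.Quotient.mk P x) := by
  obtain ⟨P, hP, hPA⟩ := Ideal.exists_comap_eq_of_mem_minimalPrimes_of_injective
    (f := (aeval x : A[X] →ₐ[A] R).toRingHom) (transcendental_iff_injective.1 hx) ⊥
    (by rw [IsDomain.minimalPrimes_eq_singleton_bot]; rfl)
  exact ⟨P, hP, transcendental_quotientMk_iff.2 fun f hf => hPA.le hf⟩

theorem submaximal_of_transcendental_unit [IsDomain A] (u : Rˣ) (hu : Transcendental A (u : R)) :
    Submaximal R := by
  obtain ⟨P, hP, hPu⟩ := exists_isPrime_transcendental_quotientMk hu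
  exact .of_surjective Ideal.Quotient.mk_surjective
    (submaximal_of_transcendental_unit_of_isDomain
      (Units.map (Ideal.Quotient.mk P).toMonoidHom u) hPu)

end Transcendental

theorem countable_setOf_dvd_of_countable_associates {M : Type*} [CommMonoid M] [Countable Mˣ]
    {a : M} (ha : {d : Associates M | d ∣ Associates.mk a}.Countable) :
    {d : M | d ∣ a}.Countable := by
  have hfiber : {d : M | d ∣ a} ⊆
      ⋃ q ∈ {q : Associates M | q ∣ Associates.mk a}, {d : M | Associates.mk d = q} := fun d hd =>
    Set.mem_biUnion (x := Associates.mk d) (Associates.mk_dvd_mk.2 hd) rfl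
  refine (ha.biUnion fun q _ => ?_).mono hfiber
  obtain ⟨b, rfl⟩ := Associates.mk_surjective q
  refine (Set.countable_range fun u : Mˣ => b * u).mono fun d hd => ?_
  exact Associates.mk_eq_mk_iff_associated.1 (Eq.symm hd)

theorem exists_transcendental_quotientMk_span_mul_sub_one {A R : Type*} [CommRing A] [Countable A]
    [CommRing R] [IsDomain R] [Uncountable R] [Algebra A R]
    (hdvd : ∀ a : R, a ≠ 0 → {d : R | d ∣ a}.Countable) {x : R} (hx : Transcendental A x) :
    ∃ y : R, Transcendental A (Ideal.Quotient.mk (Ideal.span {x * y - 1}) x) := by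
  have : Nontrivial A := (algebraMap A R).domain_nontrivial
  have hx0 : x ≠ 0 := by
    rintro rfl
    exact hx isAlgebraic_zero
  have : Countable A[X] := by
    rw [← Cardinal.mk_le_aleph0_iff]
    exact cardinalMk_le_max.trans (max_le (Cardinal.mk_le_aleph0_iff.2 ‹_›) le_rfl)
  let bad : Set R := ⋃ f : {f : A[X] // f ≠ 0}, {d : R | d ∣ aeval x f.1}
  have hbad : bad.Countable := Set.countable_iUnion fun f => hdvd _ fun h =>
    f.2 (transcendental_iff.1 hx f h)
  have hinj : Function.Injective fun y : R => x * y - 1 :=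
    (sub_left_injective).comp (mul_right_injective₀ hx0)
  obtain ⟨y, hy⟩ : ∃ y, y ∉ (fun y : R => x * y - 1) ⁻¹' bad := by
    by_contra! h
    exact not_countable (Set.countable_univ_iff.1 ((hbad.preimage hinj).mono fun y _ => h y))
  refine ⟨y, transcendental_quotientMk_iff.2 fun f hf => ?_⟩
  by_contra hf0
  exact hy (Set.mem_iUnion.2 ⟨⟨f, hf0⟩, Ideal.mem_span_singleton.1 hf⟩)

theorem stmt18_general {R : Type*} [CommRing R] [IsDomain R] (hR : ¬ Countable R)
    (hdvd : ∀ a : R, a ≠ 0 → {d : Associates R | d ∣ Associates.mk a}.Countable) :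
    Submaximal R := by
  let A : Subring R := ⊥
  have : Uncountable R := not_countable_iff.1 hR
  have hA : (A : Set R).Countable := Subring.coe_bot (R := R) ▸ Set.countable_range _
  have : Countable A := hA.to_subtype
  have halg : {x : R | IsAlgebraic A x}.Countable := Algebraic.countable A R
  by_cases hunit : ∃ u : Rˣ, Transcendental A (u : R)
  · obtain ⟨u, hu⟩ := hunit
    exact submaximal_of_transcendental_unit u hu
  simp only [Transcendental, not_exists, not_not] at hunit
  have : Countable Rˣ := Set.countable_univ_iff.1 <|
    (halg.preimage Units.val_injective).mono fun u _ => hunit u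
  obtain ⟨x, hx⟩ : ∃ x : R, Transcendental A x := by
    by_contra! h
    exact hR (Set.countable_univ_iff.1 (halg.mono fun x _ => not_not.1 (h x)))
  obtain ⟨y, hy⟩ := exists_transcendental_quotientMk_span_mul_sub_one
    (fun a ha => countable_setOf_dvd_of_countable_associates (hdvd a ha)) hx
  have hxy : Ideal.Quotient.mk (Ideal.span {x * y - 1}) x * Ideal.Quotient.mk _ y = 1 := by
    rw [← map_mul, ← map_one (Ideal.Quotient.mk _), Ideal.Quotient.eq]
    exact Ideal.mem_span_singleton_self _
  exact (submaximal_of_transcendental_unit (.mkOfMulEqOne _ _ hxy) hy).of_surjective_s18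
    Ideal.Quotient.mk_surjective

theorem stmt18 {R : Type*} [CommRing R] [IsDomain R] [UniqueFactorizationMonoid R]
    (hR : ¬ Countable R) :
    Submaximal R :=
  stmt18_general hR fun a ha => by
    have := UniqueFactorizationMonoid.fintypeSubtypeDvd _ (Associates.mk_ne_zero.2 ha)
    exact (Set.finite_coe_iff.1 (Finite.of_fintype {d // d ∣ Associates.mk a})).countable
end
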